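/- Let n ≥ 4 be an integer, let τ, C > 0, and let v : ℝ × [τ,∞) → ℝ satisfy |v(x,t) − v_∞(x,t)| ≤ C t^{−4γ} for all x ∈ ℝ and t ≥ τ. Define the reaction front F(x,t) = (1/2)(v(x,t)² − u(x,t)²)^n. Then for every y ≠ 0, lim_{t→∞} t^{nε} F(√t y, t) = (1/2)(2 μ₁(|y|) μ₂(|y|))^n. -/

import Mathlib

noncomputable def kap : ℝ := 1 / Real.sqrt Real.pi

noncomputable def kap3 : ℝ := -kap / 12

noncomputable def gam (n : ℕ) : ℝ := 1 / (2 * (n : ℝ) + 1)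

noncomputable def eps (n : ℕ) : ℝ := 1 / ((n : ℝ) - 1)

noncomputable def alph (n : ℕ) : ℝ := 1 / 2 - gam n

noncomputable def del (n : ℕ) : ℝ := ((n : ℝ) + 2) / ((n : ℝ) - 1)

noncomputable def lam (n : ℕ) : ℝ :=
  (del n * (del n + 1) / (2 * kap) ^ n) ^ (1 / ((n : ℝ) - 1))

noncomputable def lam0 (n : ℕ) : ℝ :=
  (lam n / (2 * kap)) *
    (-2 * (n : ℝ) * kap3 * del n * (del n + 1) - kap * (del n - 2 * eps n)) /
    (((n : ℝ) - 1) * del n * (del n + 1) + 2 * (2 * del n - 1))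

def IsReactiveProfile (n : ℕ) (η : ℝ → ℝ) : Prop :=
  ContDiffOn ℝ 2 η (Set.Ici 0) ∧
  (∀ z ∈ Set.Ici (0:ℝ), 0 < η z) ∧
  (∀ z ∈ Set.Ici (0:ℝ),
    derivWithin (derivWithin η (Set.Ici 0)) (Set.Ici 0) z
      = (2 * kap * z * η z + (η z) ^ 2) ^ n) ∧
  derivWithin η (Set.Ici 0) 0 = -kap ∧
  Filter.Tendsto η Filter.atTop (nhds 0)

/-- The corrector h: C² on [0,∞), satisfies
h'' + γη + αzη' = n(2κzη+η²)^{n−1}((2κz+2η)h + 2κ₃z³η), h'(0) = 0,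
h(z) − λ₀ z^{2−δ} → 0 as z → ∞. -/
def IsCorrector (n : ℕ) (η h : ℝ → ℝ) : Prop :=
  ContDiffOn ℝ 2 h (Set.Ici 0) ∧
  (∀ z ∈ Set.Ici (0:ℝ),
    derivWithin (derivWithin h (Set.Ici 0)) (Set.Ici 0) z + gam n * η z
        + alph n * z * derivWithin η (Set.Ici 0) z
      = (n : ℝ) * (2 * kap * z * η z + (η z) ^ 2) ^ (n - 1)
          * ((2 * kap * z + 2 * η z) * h z + 2 * kap3 * z ^ 3 * η z)) ∧
  derivWithin h (Set.Ici 0) 0 = 0 ∧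
  Filter.Tendsto (fun z : ℝ => h z - lam0 n * z ^ (2 - del n)) Filter.atTop (nhds 0)

noncomputable def mu1 (y : ℝ) : ℝ :=
  (2 / Real.sqrt Real.pi) * ∫ σ in (0:ℝ)..(y / 2), Real.exp (-σ ^ 2)

def IsDiffusiveProfile (n : ℕ) (μ : ℝ → ℝ) : Prop :=
  ContDiffOn ℝ 2 μ (Set.Ioi 0) ∧
  (∀ y ∈ Set.Ioi (0:ℝ), 0 < μ y) ∧
  (∀ y ∈ Set.Ioi (0:ℝ),
    deriv (deriv μ) y + y / 2 * deriv μ y + eps n * μ y = (2 * mu1 y * μ y) ^ n) ∧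
  Filter.Tendsto (fun y : ℝ => y ^ del n * μ y) (nhdsWithin 0 (Set.Ioi 0)) (nhds (lam n)) ∧
  Filter.Tendsto (fun y : ℝ => y ^ (2 * eps n) * μ y) Filter.atTop (nhds 0)

/-- u(x,t) = −erf(x/(2√t)). -/
noncomputable def uu (x t : ℝ) : ℝ := -mu1 (x / Real.sqrt t)

/-- ū(x,t) = μ₁(|x|/√t). -/
noncomputable def ubar (x t : ℝ) : ℝ := mu1 (|x| / Real.sqrt t)

/-- φ₁(z) = η(z) − λ z^{−δ}. -/
noncomputable def phi1 (n : ℕ) (η : ℝ → ℝ) (z : ℝ) : ℝ := η z - lam n * z ^ (-(del n))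

/-- φ₂(z) = −λ₀ z^{2−δ} + h(z). -/
noncomputable def phi2 (n : ℕ) (h : ℝ → ℝ) (z : ℝ) : ℝ := -lam0 n * z ^ (2 - del n) + h z

/-- μ₃(y) = μ₂(y) − λ y^{−δ}. -/
noncomputable def mu3 (n : ℕ) (μ : ℝ → ℝ) (y : ℝ) : ℝ := μ y - lam n * y ^ (-(del n))

/-- The asymptotic profile v_∞. -/
noncomputable def vInf (n : ℕ) (η μ h : ℝ → ℝ) (x t : ℝ) : ℝ :=
  mu1 (|x| / Real.sqrt t) + t ^ (-(eps n)) * μ (|x| / Real.sqrt t)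
    + t ^ (-(gam n)) * phi1 n η (|x| / t ^ alph n)
    + t ^ (-(3 * gam n)) * phi2 n h (|x| / t ^ alph n)

/-- φ(x,t) = t^{−γ} η(|z|) + t^{−ε} μ₃(|y|) + t^{−3γ} φ₂(|z|). -/
noncomputable def phiFun (n : ℕ) (η μ h : ℝ → ℝ) (x t : ℝ) : ℝ :=
  t ^ (-(gam n)) * η (|x| / t ^ alph n) + t ^ (-(eps n)) * mu3 n μ (|x| / Real.sqrt t)
    + t ^ (-(3 * gam n)) * phi2 n h (|x| / t ^ alph n)

open Filter Topology Set

/-- A maximum principle on a half line. -/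
lemma max_principle (f f' f'' : ℝ → ℝ) (a : ℝ)
    (hc : ContinuousOn f (Ici a))
    (h1 : ∀ z, a < z → HasDerivAt f (f' z) z)
    (h2 : ∀ z, a < z → HasDerivAt f' (f'' z) z)
    (ha : f a ≤ 0) (hlim : Tendsto f atTop (𝓝 0))
    (hpos : ∀ z, a < z → 0 < f z → 0 < f'' z) :
    ∀ z, a ≤ z → f z ≤ 0 := by
  intro z0 hz0
  by_contra hcon
  push Not at hcon
  obtain ⟨B, hB⟩ := (hlim.eventually (gt_mem_nhds hcon)).exists_forall_of_atTop
  have hcomp : IsCompact (Icc a (max B z0)) := isCompact_Icc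
  have hz0mem : z0 ∈ Icc a (max B z0) := ⟨hz0, le_max_right _ _⟩
  obtain ⟨m, hm, hmax⟩ := hcomp.exists_isMaxOn ⟨z0, hz0mem⟩ (hc.mono Icc_subset_Ici_self)
  have hmz : f z0 ≤ f m := hmax hz0mem
  have hmpos : 0 < f m := lt_of_lt_of_le hcon hmz
  have ham : a < m := by
    rcases lt_or_eq_of_le hm.1 with h | h
    · exact h
    · rw [← h] at hmpos; linarith
  have hall : ∀ z, a ≤ z → f z ≤ f m := by
    intro z hz
    by_cases hzB : z ≤ max B z0
    · exact hmax ⟨hz, hzB⟩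
    · push Not at hzB
      have := hB z (le_trans (le_max_left _ _) hzB.le)
      linarith
  have hlocmax : IsLocalMax f m := by
    filter_upwards [Ioi_mem_nhds ham] with z hz using hall z (le_of_lt hz)
  have hf'm : f' m = 0 := hlocmax.hasDerivAt_eq_zero (h1 m ham)
  have hderiv : deriv f =ᶠ[𝓝 m] f' := by
    filter_upwards [Ioi_mem_nhds ham] with z hz using (h1 z hz).deriv
  have hdd : deriv (deriv f) m = f'' m := by
    rw [hderiv.deriv_eq, (h2 m ham).deriv]
  have hlocmin : IsLocalMin f m := by
    apply isLocalMin_of_deriv_deriv_pos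
    · rw [hdd]; exact hpos m ham hmpos
    · rw [(h1 m ham).deriv, hf'm]
    · exact (h1 m ham).continuousAt
  have hconst : f =ᶠ[𝓝 m] fun _ => f m := by
    filter_upwards [hlocmax, hlocmin] with z hz1 hz2 using le_antisymm hz1 hz2
  have hd0 : deriv f =ᶠ[𝓝 m] fun _ => 0 := by
    have := hconst.deriv
    simpa using this
  have : deriv (deriv f) m = 0 := by
    rw [hd0.deriv_eq]; simp
  have := hpos m ham hmpos
  linarith

lemma kap_pos : 0 < kap := by
  unfold kap; positivity

lemma del_pos (n : ℕ) (hn : 4 ≤ n) : 0 < del n := by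
  have : (4:ℝ) ≤ n := by exact_mod_cast hn
  unfold del
  apply div_pos <;> linarith

lemma lam_pos (n : ℕ) (hn : 4 ≤ n) : 0 < lam n := by
  have := del_pos n hn
  have := kap_pos
  unfold lam
  positivity

lemma lam_eq (n : ℕ) (hn : 4 ≤ n) :
    (2 * kap * lam n) ^ n = del n * (del n + 1) * lam n := by
  have hd := del_pos n hn
  have hk := kap_pos
  obtain ⟨m, rfl⟩ : ∃ m, n = m + 1 := ⟨n - 1, by omega⟩
  have hm : m ≠ 0 := by omega
  have h1 : lam (m+1) ^ m = del (m+1) * (del (m+1) + 1) / (2 * kap) ^ (m+1) := by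
    unfold lam
    have : (1 / (((m+1 : ℕ) : ℝ) - 1)) = ((m:ℝ))⁻¹ := by push_cast; simp
    rw [this]
    apply Real.rpow_inv_natCast_pow _ hm
    positivity
  rw [mul_pow, pow_succ (lam (m+1)), h1]
  field_simp

lemma pow_key (n : ℕ) (hn : 4 ≤ n) (x : ℝ) (hx : 0 < x) :
    x ^ n * (x ^ (-(del n))) ^ n = x ^ (-(del n) - 1 - 1) := by
  have h4 : (4:ℝ) ≤ n := by exact_mod_cast hn
  rw [← Real.rpow_mul_natCast hx.le, ← Real.rpow_natCast, ← Real.rpow_add hx]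
  congr 1
  unfold del
  have : (n:ℝ) - 1 ≠ 0 := by linarith
  field_simp
  ring

lemma W_deriv (A b d z : ℝ) (hz : 0 < z + b) :
    HasDerivAt (fun z : ℝ => A * (z + b) ^ d) (A * d * (z + b) ^ (d - 1)) z := by
  have h0 : HasDerivAt (fun z : ℝ => z + b) 1 z := (hasDerivAt_id z).add_const b
  have := (h0.rpow_const (p := d) (Or.inl hz.ne')).const_mul A
  exact this.congr_deriv (by ring)

lemma W_tendsto (A b d : ℝ) (hd : 0 < d) :
    Tendsto (fun z : ℝ => A * (z + b) ^ (-d)) atTop (𝓝 0) := by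
  have := ((tendsto_rpow_neg_atTop hd).comp (tendsto_atTop_add_const_right atTop b tendsto_id)).const_mul A
  simpa using this

lemma eta_derivs (n : ℕ) (η : ℝ → ℝ) (hη : IsReactiveProfile n η) :
    ∃ g : ℝ → ℝ, (∀ z, 0 < z → HasDerivAt η (g z) z) ∧
      (∀ z, 0 < z → HasDerivAt g ((2 * kap * z * η z + (η z) ^ 2) ^ n) z) := by
  obtain ⟨hC, -, hode, -, -⟩ := hη
  refine ⟨derivWithin η (Ici 0), ?_, ?_⟩
  · intro z hz
    have := (hC.differentiableOn (by norm_num) z hz.le).hasDerivWithinAt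
    exact this.hasDerivAt (Ici_mem_nhds hz)
  · intro z hz
    have h1 : ContDiffOn ℝ 1 (derivWithin η (Ici 0)) (Ici 0) :=
      hC.derivWithin (uniqueDiffOn_Ici 0) (by norm_num)
    have := (h1.differentiableOn (by norm_num) z hz.le).hasDerivWithinAt
    rw [hode z hz.le] at this
    exact this.hasDerivAt (Ici_mem_nhds hz)

lemma eta_upper (n : ℕ) (hn : 4 ≤ n) (η : ℝ → ℝ) (hη : IsReactiveProfile n η)
    (z : ℝ) (hz : 0 < z) : η z ≤ lam n * z ^ (-(del n)) := by
  obtain ⟨g, hg1, hg2⟩ := eta_derivs n η hη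
  obtain ⟨hC, hpos, -, -, hlim⟩ := hη
  have hd := del_pos n hn
  have hl := lam_pos n hn
  have hk := kap_pos
  -- a small starting point
  have ha : ∃ a, 0 < a ∧ a < z ∧ η a ≤ lam n * a ^ (-(del n)) := by
    have e1 : Tendsto η (𝓝[>] 0) (𝓝 (η 0)) :=
      (hC.continuousOn 0 self_mem_Ici).mono_left (nhdsWithin_mono _ Ioi_subset_Ici_self)
    have e2 : Tendsto (fun a : ℝ => lam n * a ^ (-(del n))) (𝓝[>] 0) atTop :=
      (tendsto_rpow_neg_nhdsGT_zero (by linarith)).const_mul_atTop hl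
    have e3 := e1.eventually (gt_mem_nhds (lt_add_one (η 0)))
    have e4 := e2.eventually_ge_atTop (η 0 + 1)
    have e5 : ∀ᶠ a in 𝓝[>] (0:ℝ), a ∈ Ioo 0 z := Ioo_mem_nhdsGT hz
    obtain ⟨a, h3, h4, h5⟩ := (e3.and (e4.and e5)).exists
    exact ⟨a, h5.1, h5.2, by linarith⟩
  obtain ⟨a, ha0, haz, hle⟩ := ha
  have key := max_principle (fun z => η z - lam n * (z + 0) ^ (-(del n)))
    (fun z => g z - lam n * (-(del n)) * (z + 0) ^ (-(del n) - 1))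
    (fun z => (2 * kap * z * η z + (η z) ^ 2) ^ n
      - lam n * (-(del n)) * (-(del n) - 1) * (z + 0) ^ (-(del n) - 1 - 1)) a
    (fun x hx => by
      have hx0 : 0 < x := lt_of_lt_of_le ha0 hx
      exact ((hg1 x hx0).sub (W_deriv _ 0 _ x (by linarith))).continuousAt.continuousWithinAt)
    (fun x hx => (hg1 x (by linarith)).sub (W_deriv _ 0 _ x (by linarith)))
    (fun x hx => (hg2 x (by linarith)).sub (W_deriv _ 0 _ x (by linarith)))
    (by simpa using hle)
    (by simpa using hlim.sub (W_tendsto (lam n) 0 _ hd))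
    (by
      intro x hx hfx
      have hx0 : 0 < x := lt_trans ha0 hx
      simp only [add_zero] at hfx ⊢
      rw [← pow_key n hn x hx0]
      have hp : 0 < x ^ (-(del n)) := by positivity
      have e := lam_eq n hn
      have hlt : (2 * kap * x * (lam n * x ^ (-(del n)))) ^ n
          < (2 * kap * x * η x + (η x) ^ 2) ^ n := by
        apply pow_lt_pow_left₀ _ (by positivity) (by omega)
        have : 2 * kap * x * (lam n * x ^ (-(del n))) < 2 * kap * x * η x :=
          mul_lt_mul_of_pos_left (by linarith) (by positivity)
        have := sq_nonneg (η x)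
        linarith
      have e2 : (2 * kap * x * (lam n * x ^ (-(del n)))) ^ n
          = (2 * kap * lam n) ^ n * (x ^ n * (x ^ (-(del n))) ^ n) := by
        rw [← mul_pow, ← mul_pow]; congr 1; ring
      rw [e2, e] at hlt
      linarith)
  have := key z haz.le
  simp only [add_zero] at this
  linarith

lemma eta_lower (n : ℕ) (hn : 4 ≤ n) (η : ℝ → ℝ) (hη : IsReactiveProfile n η)
    (s : ℝ) (hs : 0 < s) : ∃ b, 0 < b ∧ ∀ᶠ z in atTop,
      lam n / (1 + s) ^ n * (z + b) ^ (-(del n)) ≤ η z := by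
  obtain ⟨g, hg1, hg2⟩ := eta_derivs n η hη
  obtain ⟨hC, hpos, -, -, hlim⟩ := hη
  have hd := del_pos n hn
  have hl := lam_pos n hn
  have hk := kap_pos
  obtain ⟨Z, hZ⟩ : ∃ Z, 0 < Z ∧ ∀ z, Z ≤ z → η z ≤ 2 * kap * s * z := by
    obtain ⟨B, hB⟩ := (hlim.eventually (gt_mem_nhds (show 0 < 2 * kap * s by positivity))).exists_forall_of_atTop
    refine ⟨max B 1, by positivity, fun z hz => ?_⟩
    have h1 := hB z (le_trans (le_max_left _ _) hz)
    have h2 : 1 ≤ z := le_trans (le_max_right _ _) hz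
    have h3 : 0 < 2 * kap * s := by positivity
    nlinarith
  obtain ⟨hZ0, hZ⟩ := hZ
  set q := (1 + s) ^ n with hq
  have hq1 : 1 ≤ q := one_le_pow₀ (by linarith)
  set A := lam n / q with hA
  have hA0 : 0 < A := by positivity
  have hAeq : (2 * kap) ^ n * q * A ^ n ≤ A * (del n * (del n + 1)) := by
    have e := lam_eq n hn
    have e1 : A * (del n * (del n + 1)) = (2 * kap) ^ n * lam n ^ n / q := by
      rw [← mul_pow, e, hA]; ring
    rw [e1, hA, div_pow, mul_assoc, mul_div_assoc]
    apply mul_le_mul_of_nonneg_left _ (by positivity)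
    rw [← mul_div_assoc, div_le_div_iff₀ (by positivity) (by positivity)]
    have : q * q ≤ q ^ n := by
      rw [← pow_two]; exact pow_le_pow_right₀ hq1 (by omega)
    have h0 : 0 < lam n ^ n := by positivity
    nlinarith
  obtain ⟨b, hb0, hb⟩ : ∃ b, 0 < b ∧ A * (Z + b) ^ (-(del n)) ≤ η Z := by
    have e := (W_tendsto A Z (del n) hd).eventually (gt_mem_nhds (hpos Z hZ0.le))
    obtain ⟨b, h1, h2⟩ := (e.and (eventually_gt_atTop 0)).exists
    exact ⟨b, h2, by rw [add_comm]; exact h1.le⟩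
  refine ⟨b, hb0, ?_⟩
  have key := max_principle (fun z => A * (z + b) ^ (-(del n)) - η z)
    (fun z => A * (-(del n)) * (z + b) ^ (-(del n) - 1) - g z)
    (fun z => A * (-(del n)) * (-(del n) - 1) * (z + b) ^ (-(del n) - 1 - 1)
      - (2 * kap * z * η z + (η z) ^ 2) ^ n) Z
    (fun x hx => by
      have hx0 : 0 < x := lt_of_lt_of_le hZ0 hx
      exact ((W_deriv _ b _ x (by linarith)).sub (hg1 x hx0)).continuousAt.continuousWithinAt)
    (fun x hx => (W_deriv _ b _ x (by linarith)).sub (hg1 x (by linarith)))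
    (fun x hx => (W_deriv _ b _ x (by linarith)).sub (hg2 x (by linarith)))
    (by linarith)
    (by simpa using (W_tendsto A b _ hd).sub hlim)
    (by
      intro x hx hfx
      have hx0 : 0 < x := lt_trans hZ0 hx
      have hxb : 0 < x + b := by linarith
      have hex := hpos x hx0.le
      have hle := hZ x hx.le
      rw [← pow_key n hn (x + b) hxb]
      set p := (x + b) ^ (-(del n)) with hp'
      have hp : 0 < p := by positivity
      have hlt : (2 * kap * x * η x + (η x) ^ 2) ^ n
          < (2 * kap * (1 + s) * (x + b) * (A * p)) ^ n := by
        apply pow_lt_pow_left₀ _ (by positivity) (by omega)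
        have i1 : 2 * kap * x * η x + (η x) ^ 2 ≤ (2 * kap * (1 + s) * x) * η x := by
          nlinarith
        have i2 : (2 * kap * (1 + s) * x) * η x < (2 * kap * (1 + s) * x) * (A * p) :=
          mul_lt_mul_of_pos_left (by linarith) (by positivity)
        have i3 : (2 * kap * (1 + s) * x) * (A * p) ≤ (2 * kap * (1 + s) * (x + b)) * (A * p) := by
          gcongr; linarith
        linarith
      have e2 : (2 * kap * (1 + s) * (x + b) * (A * p)) ^ n
          = ((2 * kap) ^ n * q * A ^ n) * ((x + b) ^ n * p ^ n) := by
        rw [hq]; simp only [mul_pow]; ring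
      rw [e2] at hlt
      have i4 := mul_le_mul_of_nonneg_right hAeq (show 0 ≤ (x + b) ^ n * p ^ n by positivity)
      linarith)
  filter_upwards [eventually_ge_atTop Z] with z hz
  have := key z hz
  linarith

lemma eta_asymp (n : ℕ) (hn : 4 ≤ n) (η : ℝ → ℝ) (hη : IsReactiveProfile n η) :
    Tendsto (fun z : ℝ => z ^ del n * η z) atTop (𝓝 (lam n)) := by
  have hd := del_pos n hn
  have hl := lam_pos n hn
  rw [tendsto_order]
  constructor
  · intro a ha
    obtain ⟨s, hs, hsa⟩ : ∃ s, 0 < s ∧ a < lam n / (1 + s) ^ n := by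
      have hc : ContinuousAt (fun s : ℝ => lam n / (1 + s) ^ n) 0 := by
        apply ContinuousAt.div (by fun_prop) (by fun_prop) (by simp)
      have ht : Tendsto (fun s : ℝ => lam n / (1 + s) ^ n) (𝓝[>] 0) (𝓝 (lam n)) := by
        have := hc.tendsto.mono_left (nhdsWithin_le_nhds (s := Ioi 0))
        simpa using this
      obtain ⟨s, h1, h2⟩ := ((ht.eventually (lt_mem_nhds ha)).and self_mem_nhdsWithin).exists
      exact ⟨s, h2, h1⟩
    obtain ⟨b, hb, hev⟩ := eta_lower n hn η hη s hs
    have hratio : Tendsto (fun z : ℝ => 1 - b * (z + b)⁻¹) atTop (𝓝 1) := by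
      have := (tendsto_inv_atTop_zero.comp
        (tendsto_atTop_add_const_right atTop b tendsto_id)).const_mul b
      simpa using this.const_sub 1
    have hr2 : Tendsto (fun z : ℝ => lam n / (1 + s) ^ n * (1 - b * (z + b)⁻¹) ^ del n)
        atTop (𝓝 (lam n / (1 + s) ^ n)) := by
      have := (hratio.rpow_const (p := del n) (Or.inl one_ne_zero)).const_mul (lam n / (1 + s) ^ n)
      simpa using this
    filter_upwards [hr2.eventually (lt_mem_nhds hsa), hev, eventually_gt_atTop 0] with z h1 h2 h3
    have hzb : 0 < z + b := by linarith
    have e1 : 1 - b * (z + b)⁻¹ = z / (z + b) := by field_simp; ring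
    rw [e1, Real.div_rpow h3.le hzb.le] at h1
    rw [Real.rpow_neg hzb.le] at h2
    have := mul_le_mul_of_nonneg_left h2 (show 0 ≤ z ^ del n by positivity)
    calc a < _ := h1
      _ = z ^ del n * (lam n / (1 + s) ^ n * ((z + b) ^ del n)⁻¹) := by ring
      _ ≤ _ := this
  · intro a ha
    filter_upwards [eventually_gt_atTop 0] with z hz
    have h1 := eta_upper n hn η hη z hz
    rw [Real.rpow_neg hz.le] at h1
    have hp : 0 < z ^ del n := by positivity
    have := mul_le_mul_of_nonneg_left h1 hp.le
    have e : z ^ del n * (lam n * (z ^ del n)⁻¹) = lam n := by field_simp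
    linarith

lemma phi1_asymp (n : ℕ) (hn : 4 ≤ n) (η : ℝ → ℝ) (hη : IsReactiveProfile n η) :
    Tendsto (fun z : ℝ => z ^ del n * phi1 n η z) atTop (𝓝 0) := by
  have h := (eta_asymp n hn η hη).sub_const (lam n)
  rw [sub_self] at h
  refine h.congr' ?_
  filter_upwards [eventually_gt_atTop 0] with z hz
  unfold phi1
  rw [Real.rpow_neg hz.le]
  have hp : 0 < z ^ del n := by positivity
  field_simp

lemma mu1_neg (y : ℝ) : mu1 (-y) = -mu1 y := by
  unfold mu1
  have h := intervalIntegral.integral_comp_neg (a := 0) (b := y / 2)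
    (fun σ : ℝ => Real.exp (-σ ^ 2))
  simp only [neg_sq, neg_zero] at h
  rw [neg_div, h, intervalIntegral.integral_symm]
  ring

lemma mu1_abs_sq (y : ℝ) : mu1 |y| ^ 2 = mu1 y ^ 2 := by
  rcases abs_choice y with h | h <;> rw [h]
  rw [mu1_neg, neg_sq]

/-- The reaction front on the diffusive scale: for every y ≠ 0,
t^{nε} F(√t y, t) → (1/2)(2μ₁(|y|)μ₂(|y|))ⁿ as t → ∞,
where F(x,t) = (1/2)(v(x,t)² − u(x,t)²)ⁿ. -/
theorem reaction_front_diffusive_scale (n : ℕ) (hn : 4 ≤ n) (η μ h : ℝ → ℝ)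
    (hη : IsReactiveProfile n η) (hμ : IsDiffusiveProfile n μ) (hh : IsCorrector n η h)
    (τ C : ℝ) (hτ : 0 < τ) (hC : 0 < C) (v : ℝ → ℝ → ℝ)
    (hv : ∀ x : ℝ, ∀ t ≥ τ, |v x t - vInf n η μ h x t| ≤ C * t ^ (-(4 * gam n)))
    (y : ℝ) (hy : y ≠ 0) :
    Filter.Tendsto
      (fun t : ℝ => t ^ ((n : ℝ) * eps n) *
        ((1 : ℝ) / 2 * (v (Real.sqrt t * y) t ^ 2 - uu (Real.sqrt t * y) t ^ 2) ^ n))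
      Filter.atTop
      (nhds ((1 : ℝ) / 2 * (2 * mu1 |y| * μ |y|) ^ n)) := by
  have h4 : (4:ℝ) ≤ n := by exact_mod_cast hn
  have hd := del_pos n hn
  have hy' : 0 < |y| := abs_pos.mpr hy
  have hγ : 0 < gam n := by unfold gam; positivity
  have hε : 0 < eps n := by unfold eps; apply div_pos <;> linarith
  have hεγ : eps n = gam n * del n + gam n := by
    unfold eps gam del
    have : (n:ℝ) - 1 ≠ 0 := by linarith
    field_simp
    ring
  have h3γ : eps n ≤ 3 * gam n := by
    unfold eps gam
    rw [mul_one_div, div_le_div_iff₀ (by linarith) (by linarith)]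
    linarith
  have h4γ : 0 < 4 * gam n - eps n := by linarith
  -- the inner variable
  have hz : Tendsto (fun t : ℝ => |y| * t ^ gam n) atTop atTop :=
    (tendsto_rpow_atTop hγ).const_mul_atTop hy'
  have hT1 : Tendsto (fun t : ℝ => t ^ (eps n - gam n) * phi1 n η (|y| * t ^ gam n))
      atTop (𝓝 0) := by
    have := ((phi1_asymp n hn η hη).comp hz).const_mul ((|y| ^ del n)⁻¹)
    rw [mul_zero] at this
    refine this.congr' ?_
    filter_upwards [eventually_gt_atTop 0] with t ht
    simp only [Function.comp]
    rw [Real.mul_rpow hy'.le (by positivity), ← Real.rpow_mul ht.le]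
    have e : eps n - gam n = gam n * del n := by linarith
    rw [e]
    have : 0 < |y| ^ del n := by positivity
    field_simp
  have hphi2 : Tendsto (fun t : ℝ => phi2 n h (|y| * t ^ gam n)) atTop (𝓝 0) := by
    refine (hh.2.2.2.comp hz).congr (fun t => ?_)
    simp only [Function.comp, phi2]
    ring
  have hT2 : Tendsto (fun t : ℝ => t ^ (eps n - 3 * gam n) * phi2 n h (|y| * t ^ gam n))
      atTop (𝓝 0) := by
    rw [tendsto_zero_iff_abs_tendsto_zero] at hphi2 ⊢
    refine squeeze_zero' (Eventually.of_forall fun t => abs_nonneg _) ?_ hphi2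
    filter_upwards [eventually_ge_atTop 1] with t ht
    have : t ^ (eps n - 3 * gam n) ≤ 1 := Real.rpow_le_one_of_one_le_of_nonpos ht (by linarith)
    have h0 : 0 ≤ t ^ (eps n - 3 * gam n) := by positivity
    simp only [Function.comp]
    rw [abs_mul, abs_of_nonneg h0]
    exact mul_le_of_le_one_left (abs_nonneg _) this
  have hT3 : Tendsto (fun t : ℝ => t ^ eps n * (v (Real.sqrt t * y) t
      - vInf n η μ h (Real.sqrt t * y) t)) atTop (𝓝 0) := by
    rw [tendsto_zero_iff_abs_tendsto_zero]
    have hlim : Tendsto (fun t : ℝ => C * t ^ (-(4 * gam n - eps n))) atTop (𝓝 0) := by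
      simpa using (tendsto_rpow_neg_atTop h4γ).const_mul C
    refine squeeze_zero' (Eventually.of_forall fun t => abs_nonneg _) ?_ hlim
    filter_upwards [eventually_ge_atTop τ, eventually_gt_atTop 0] with t ht ht0
    have h0 : 0 < t ^ eps n := by positivity
    simp only [Function.comp]
    rw [abs_mul, abs_of_pos h0]
    have := mul_le_mul_of_nonneg_left (hv (Real.sqrt t * y) t ht) h0.le
    refine this.trans_eq ?_
    have e : -(4 * gam n - eps n) = eps n + -(4 * gam n) := by ring
    rw [e, Real.rpow_add ht0]
    ring
  have hvInf : ∀ t : ℝ, 0 < t → t ^ eps n * (vInf n η μ h (Real.sqrt t * y) t - mu1 |y|)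
      = μ |y| + t ^ (eps n - gam n) * phi1 n η (|y| * t ^ gam n)
        + t ^ (eps n - 3 * gam n) * phi2 n h (|y| * t ^ gam n) := by
    intro t ht
    have hs : 0 < Real.sqrt t := Real.sqrt_pos.mpr ht
    have e1 : |Real.sqrt t * y| / Real.sqrt t = |y| := by
      rw [abs_mul, abs_of_pos hs]; field_simp
    have e2 : |Real.sqrt t * y| / t ^ alph n = |y| * t ^ gam n := by
      rw [abs_mul, abs_of_pos hs, Real.sqrt_eq_rpow]
      have : gam n = 1 / 2 - alph n := by unfold alph; ring
      rw [this, Real.rpow_sub ht]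
      ring
    have e3 : t ^ eps n * t ^ (-(eps n)) = 1 := by
      rw [← Real.rpow_add ht]; simp
    have e4 : t ^ (eps n - gam n) = t ^ eps n * t ^ (-(gam n)) := by
      rw [← Real.rpow_add ht]; ring_nf
    have e5 : t ^ (eps n - 3 * gam n) = t ^ eps n * t ^ (-(3 * gam n)) := by
      rw [← Real.rpow_add ht]; ring_nf
    unfold vInf
    rw [e1, e2, e4, e5]
    linear_combination (μ |y|) * e3
  have hdiff : Tendsto (fun t : ℝ => t ^ eps n * (v (Real.sqrt t * y) t - mu1 |y|))
      atTop (𝓝 (μ |y|)) := by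
    have := ((tendsto_const_nhds (x := μ |y|)).add hT1).add hT2 |>.add hT3
    simp only [add_zero] at this
    refine this.congr' ?_
    filter_upwards [eventually_gt_atTop 0] with t ht
    rw [← hvInf t ht]
    ring
  have hv0 : Tendsto (fun t : ℝ => v (Real.sqrt t * y) t - mu1 |y|) atTop (𝓝 0) := by
    have := (tendsto_rpow_neg_atTop hε).mul hdiff
    rw [zero_mul] at this
    refine this.congr' ?_
    filter_upwards [eventually_gt_atTop 0] with t ht
    rw [← mul_assoc, ← Real.rpow_add ht]
    simp
  have hsum : Tendsto (fun t : ℝ => v (Real.sqrt t * y) t + mu1 |y|) atTop (𝓝 (2 * mu1 |y|)) := by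
    have := hv0.add_const (2 * mu1 |y|)
    rw [zero_add] at this
    refine this.congr (fun t => by ring)
  have hfin := (((hsum.mul hdiff).pow n).const_mul ((1:ℝ) / 2))
  refine hfin.congr' ?_
  filter_upwards [eventually_gt_atTop 0] with t ht
  have hs : Real.sqrt t ≠ 0 := (Real.sqrt_pos.mpr ht).ne'
  have hu : uu (Real.sqrt t * y) t ^ 2 = mu1 |y| ^ 2 := by
    unfold uu
    rw [mu1_abs_sq, neg_sq]
    congr 2
    field_simp
  have hp : t ^ ((n:ℝ) * eps n) = (t ^ eps n) ^ n := by
    rw [mul_comm, Real.rpow_mul_natCast ht.le]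
  rw [hu, hp]
  have e : (v (Real.sqrt t * y) t + mu1 |y|) * (t ^ eps n * (v (Real.sqrt t * y) t - mu1 |y|))
      = t ^ eps n * (v (Real.sqrt t * y) t ^ 2 - mu1 |y| ^ 2) := by ring
  rw [e, mul_pow]
  ring
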